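/- arXiv:math/0106211 — 2 statements merged into one kernel-verified Lean document; each statement's English description precedes it below -/
import Mathlib

section
/- Let k be a field and r a positive integer, and let A = k[X,Y]/(XY) be the quotient of the polynomial ring in two variables by the ideal generated by XY. A k-algebra automorphism φ of A fixes the images of X^r and Y^r (i.e. φ(X^r) = X^r and φ(Y^r) = Y^r in A) if and only if φ(X) = ζ·X and φ(Y) = ζ'·Y for some ζ, ζ' ∈ k with ζ^r = ζ'^r = 1. Moreover, (ζ, ζ') ↦ (X ↦ ζX, Y ↦ ζ'Y) is a group isomorphism from μ_r(k) × μ_r(k) onto the subgroup of k-algebra automorphisms of A fixing X^r and Y^r. -/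
/-!
The two components of the node give projections `π₀, π₁ : k[X,Y]/(XY) → k[T]`, setting `Y = 0` and
`X = 0` respectively. They are jointly injective: a polynomial vanishing on `X = 0` is `X * q`, and
if it also vanishes on `Y = 0` then `q(T,0) = 0`, so `Y` divides `q`.

If `φ` fixes `X ^ r`, then `π₀ (φ X) ^ r = T ^ r` and `π₁ (φ X) ^ r = 0`. In the domain `k[T]` this
forces `π₀ (φ X) = ζ T` with `ζ ^ r = 1` (compare degrees, values at `0` and leading coefficients)
and `π₁ (φ X) = 0`, so `φ X = ζ X`; symmetrically for `Y`. Conversely, the scalings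
`(X, Y) ↦ (a X, b Y)` with `a, b` units form a group of automorphisms, and `a, b` can be read off
after projecting.
-/

open MvPolynomial

/-- The ideal `(XY)` in `k[X,Y]`. -/
noncomputable abbrev nodalIdeal (k : Type*) [Field k] : Ideal (MvPolynomial (Fin 2) k) :=
  Ideal.span {(X 0 * X 1 : MvPolynomial (Fin 2) k)}

/-- The coordinate ring `k[X,Y]/(XY)` of a node. -/
noncomputable abbrev NodalRing (k : Type*) [Field k] : Type _ :=
  MvPolynomial (Fin 2) k ⧸ nodalIdeal k

namespace NodalRing

variable {k : Type*} [Field k]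

/-- The class of the `i`-th coordinate function on the node. -/
noncomputable abbrev x (k : Type*) [Field k] (i : Fin 2) : NodalRing k :=
  Ideal.Quotient.mk (nodalIdeal k) (X i)

lemma x_zero_mul_x_one : x k 0 * x k 1 = 0 := by
  rw [← map_mul, Ideal.Quotient.eq_zero_iff_mem]
  exact Ideal.subset_span rfl

lemma mk_C_mul_X (a : k) (i : Fin 2) :
    Ideal.Quotient.mk (nodalIdeal k) (C a * X i) = a • x k i := by
  rw [← smul_eq_C_mul]
  rfl

/-- The algebra homomorphism out of the nodal ring sending `X` and `Y` to two elements with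
product zero. -/
noncomputable def lift {B : Type*} [CommRing B] [Algebra k B] (u : Fin 2 → B)
    (h : u 0 * u 1 = 0) : NodalRing k →ₐ[k] B :=
  Ideal.Quotient.liftₐ (nodalIdeal k) (aeval u) (by
    intro a ha
    have hle : nodalIdeal k ≤ RingHom.ker (aeval (R := k) u) := by
      rw [Ideal.span_le, Set.singleton_subset_iff]
      simp [RingHom.mem_ker, h]
    exact hle ha)

@[simp] lemma lift_mk {B : Type*} [CommRing B] [Algebra k B] (u : Fin 2 → B)
    (h : u 0 * u 1 = 0) (p : MvPolynomial (Fin 2) k) :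
    lift u h (Ideal.Quotient.mk (nodalIdeal k) p) = aeval u p := rfl

lemma algHom_ext {B : Type*} [CommRing B] [Algebra k B] {f g : NodalRing k →ₐ[k] B}
    (h : ∀ i, f (x k i) = g (x k i)) : f = g :=
  Ideal.Quotient.algHom_ext _ (MvPolynomial.algHom_ext h)

/-- Restriction to the `i`-th branch of the node, whose coordinate is the image of `X i`; the
other coordinate vanishes there. -/
noncomputable def proj (k : Type*) [Field k] (i : Fin 2) : NodalRing k →ₐ[k] Polynomial k :=
  lift (Pi.single i Polynomial.X) (by fin_cases i <;> simp)

lemma proj_x_self (i : Fin 2) : proj k i (x k i) = Polynomial.X := by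
  simp [proj]

lemma proj_x_of_ne {i j : Fin 2} (h : j ≠ i) : proj k i (x k j) = 0 := by
  simp [proj, h]

/-- A polynomial vanishing on the axis with coordinate `X i` is divisible by the other
coordinate. -/
lemma X_dvd_of_aeval_single_eq_zero {i j : Fin 2} (hij : j ≠ i) (p : MvPolynomial (Fin 2) k)
    (h : aeval (Pi.single i Polynomial.X : Fin 2 → Polynomial k) p = 0) : X j ∣ p := by
  -- Modulo `X j`, every polynomial agrees with its restriction to the axis `X j = 0`.
  have key : Ideal.Quotient.mkₐ k (Ideal.span {(X j : MvPolynomial (Fin 2) k)}) =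
      ((Ideal.Quotient.mkₐ k (Ideal.span {(X j : MvPolynomial (Fin 2) k)})).comp
        (Polynomial.aeval (X i : MvPolynomial (Fin 2) k))).comp
          (aeval (Pi.single i Polynomial.X : Fin 2 → Polynomial k)) := by
    refine MvPolynomial.algHom_ext fun l => ?_
    by_cases hl : l = i
    · subst hl
      simp
    · obtain rfl : l = j := by omega
      simp [hl]
  have := DFunLike.congr_fun key p
  simp only [AlgHom.comp_apply, h, map_zero] at this
  rwa [Ideal.Quotient.mkₐ_eq_mk, Ideal.Quotient.eq_zero_iff_mem, Ideal.mem_span_singleton] at this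

/-- The nodal ring embeds in the product of the coordinate rings of its two branches. -/
lemma eq_of_proj_eq {a b : NodalRing k} (h : ∀ i, proj k i a = proj k i b) : a = b := by
  rw [← sub_eq_zero]
  have h' : ∀ i, proj k i (a - b) = 0 := fun i => by rw [map_sub, h, sub_self]
  generalize a - b = c at h'
  obtain ⟨p, rfl⟩ := Ideal.Quotient.mk_surjective c
  obtain ⟨q, rfl⟩ := X_dvd_of_aeval_single_eq_zero (i := 1) (j := 0) (by decide) p (h' 1)
  have h0 := h' 0
  rw [map_mul, map_mul, proj_x_self, mul_eq_zero] at h0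
  obtain ⟨s, rfl⟩ := X_dvd_of_aeval_single_eq_zero (i := 0) (j := 1) (by decide) q
    (h0.resolve_left Polynomial.X_ne_zero)
  rw [map_mul, map_mul, ← mul_assoc, x_zero_mul_x_one, zero_mul]

/-- The `r`-th roots of `T ^ r` in `k[T]` are the `ζ T` with `ζ ^ r = 1`. -/
lemma eq_smul_X_of_pow_eq {r : ℕ} (hr : 0 < r) {f : Polynomial k}
    (h : f ^ r = Polynomial.X ^ r) : ∃ ζ : k, ζ ^ r = 1 ∧ f = ζ • Polynomial.X := by
  have hdeg : f.natDegree = 1 := by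
    have := congrArg Polynomial.natDegree h
    rw [Polynomial.natDegree_pow, Polynomial.natDegree_X_pow] at this
    exact Nat.eq_of_mul_eq_mul_left hr (by omega)
  have hlead : f.leadingCoeff ^ r = 1 := by
    rw [← Polynomial.leadingCoeff_pow, h, Polynomial.leadingCoeff_X_pow]
  have h0 : f.coeff 0 = 0 := by
    have := congrArg (Polynomial.eval 0) h
    rw [Polynomial.eval_pow, Polynomial.eval_pow, Polynomial.eval_X, zero_pow hr.ne'] at this
    rw [Polynomial.coeff_zero_eq_eval_zero]
    exact eq_zero_of_pow_eq_zero this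
  refine ⟨f.leadingCoeff, hlead, ?_⟩
  have := Polynomial.eq_X_add_C_of_natDegree_le_one hdeg.le
  rw [h0, map_zero, add_zero] at this
  rw [Polynomial.leadingCoeff, hdeg, Polynomial.smul_eq_C_mul]
  exact this

/-- Fixed `r`-th powers determine a coordinate up to an `r`-th root of unity. -/
lemma eq_smul_x_of_pow_eq {r : ℕ} (hr : 0 < r) {a : NodalRing k} {i : Fin 2}
    (h : a ^ r = x k i ^ r) : ∃ ζ : k, ζ ^ r = 1 ∧ a = ζ • x k i := by
  have hi : proj k i a ^ r = Polynomial.X ^ r := by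
    rw [← map_pow, h, map_pow, proj_x_self]
  obtain ⟨ζ, hζ, hf⟩ := eq_smul_X_of_pow_eq hr hi
  refine ⟨ζ, hζ, eq_of_proj_eq fun j => ?_⟩
  rw [map_smul]
  by_cases hj : i = j
  · subst hj
    rw [hf, proj_x_self]
  · have hz : proj k j a ^ r = 0 := by
      rw [← map_pow, h, map_pow, proj_x_of_ne hj, zero_pow hr.ne']
    rw [proj_x_of_ne hj, smul_zero]
    exact eq_zero_of_pow_eq_zero hz

lemma smul_x_injective (i : Fin 2) : Function.Injective fun a : k => a • x k i := by
  intro a b h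
  have := congrArg (proj k i) h
  simp only [map_smul, proj_x_self] at this
  simpa using congrArg (Polynomial.coeff · 1) this

/-- The endomorphism `(X, Y) ↦ (a X, b Y)` of the nodal ring. -/
noncomputable def scaleHom (a b : k) : NodalRing k →ₐ[k] NodalRing k :=
  lift ![a • x k 0, b • x k 1] (by simp [smul_mul_smul_comm, x_zero_mul_x_one])

@[simp] lemma scaleHom_x_zero (a b : k) : scaleHom a b (x k 0) = a • x k 0 := by
  simp [scaleHom]

@[simp] lemma scaleHom_x_one (a b : k) : scaleHom a b (x k 1) = b • x k 1 := by
  simp [scaleHom]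

lemma scaleHom_comp (a b c d : k) :
    (scaleHom a b).comp (scaleHom c d) = scaleHom (a * c) (b * d) := by
  refine algHom_ext fun i => ?_
  fin_cases i <;> simp [smul_smul, mul_comm]

lemma scaleHom_one : scaleHom (1 : k) 1 = AlgHom.id k _ := by
  refine algHom_ext fun i => ?_
  fin_cases i <;> simp

/-- The action of the torus `kˣ × kˣ` on the nodal ring by scaling the two coordinates. -/
noncomputable def scale : kˣ × kˣ →* (NodalRing k ≃ₐ[k] NodalRing k) where
  toFun u := AlgEquiv.ofAlgHom (scaleHom (u.1 : k) (u.2 : k))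
    (scaleHom (↑u.1⁻¹ : k) (↑u.2⁻¹ : k))
    (by rw [scaleHom_comp, Units.mul_inv, Units.mul_inv, scaleHom_one])
    (by rw [scaleHom_comp, Units.inv_mul, Units.inv_mul, scaleHom_one])
  map_one' := AlgEquiv.ext fun a => DFunLike.congr_fun scaleHom_one a
  map_mul' u v := AlgEquiv.ext fun a =>
    (DFunLike.congr_fun (scaleHom_comp (u.1 : k) u.2 v.1 v.2) a).symm

lemma scale_x_zero (u : kˣ × kˣ) : scale u (x k 0) = (u.1 : k) • x k 0 :=
  scaleHom_x_zero _ _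

lemma scale_x_one (u : kˣ × kˣ) : scale u (x k 1) = (u.2 : k) • x k 1 :=
  scaleHom_x_one _ _

lemma scale_injective : Function.Injective (scale (k := k)) := by
  intro u v h
  refine Prod.ext (Units.ext (smul_x_injective 0 ?_)) (Units.ext (smul_x_injective 1 ?_))
  · simpa only [scale_x_zero] using DFunLike.congr_fun h (x k 0)
  · simpa only [scale_x_one] using DFunLike.congr_fun h (x k 1)

lemma fixes_pow_iff {r : ℕ} (hr : 0 < r) (φ : NodalRing k ≃ₐ[k] NodalRing k) (i : Fin 2) :
    φ (x k i ^ r) = x k i ^ r ↔ ∃ ζ : k, ζ ^ r = 1 ∧ φ (x k i) = ζ • x k i := by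
  rw [map_pow]
  constructor
  · exact eq_smul_x_of_pow_eq hr
  · rintro ⟨ζ, hζ, h⟩
    rw [h, smul_pow, hζ, one_smul]

/-- The automorphisms of the nodal ring fixing `X ^ r` and `Y ^ r`. -/
noncomputable def fixingSubgroup (k : Type*) [Field k] (r : ℕ) :
    Subgroup (NodalRing k ≃ₐ[k] NodalRing k) :=
  MulAction.stabilizer _ (x k 0 ^ r) ⊓ MulAction.stabilizer _ (x k 1 ^ r)

lemma mem_fixingSubgroup {r : ℕ} {φ : NodalRing k ≃ₐ[k] NodalRing k} :
    φ ∈ fixingSubgroup k r ↔ φ (x k 0 ^ r) = x k 0 ^ r ∧ φ (x k 1 ^ r) = x k 1 ^ r :=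
  Iff.rfl

/-- The scaling action restricted to pairs of `r`-th roots of unity, which fixes `X ^ r` and
`Y ^ r`. -/
noncomputable def rootScale (k : Type*) [Field k] (r : ℕ) :
    rootsOfUnity r k × rootsOfUnity r k →* fixingSubgroup k r :=
  (scale.comp ((rootsOfUnity r k).subtype.prodMap (rootsOfUnity r k).subtype)).codRestrict
    (fixingSubgroup k r) fun u => by
      have h1 := (mem_rootsOfUnity' r _).1 u.1.2
      have h2 := (mem_rootsOfUnity' r _).1 u.2.2
      refine mem_fixingSubgroup.2 ⟨?_, ?_⟩
      · rw [map_pow, MonoidHom.comp_apply, scale_x_zero, smul_pow]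
        simp [h1]
      · rw [map_pow, MonoidHom.comp_apply, scale_x_one, smul_pow]
        simp [h2]

lemma rootScale_x_zero {r : ℕ} (u : rootsOfUnity r k × rootsOfUnity r k) :
    (rootScale k r u : NodalRing k ≃ₐ[k] NodalRing k) (x k 0) = ((u.1 : kˣ) : k) • x k 0 :=
  scale_x_zero _

lemma rootScale_x_one {r : ℕ} (u : rootsOfUnity r k × rootsOfUnity r k) :
    (rootScale k r u : NodalRing k ≃ₐ[k] NodalRing k) (x k 1) = ((u.2 : kˣ) : k) • x k 1 :=
  scale_x_one _

lemma rootScale_bijective {r : ℕ} (hr : 0 < r) : Function.Bijective (rootScale k r) := by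
  constructor
  · intro u v h
    have := scale_injective (congrArg Subtype.val h)
    exact Prod.ext (Subtype.ext (congrArg Prod.fst this)) (Subtype.ext (congrArg Prod.snd this))
  · rintro ⟨φ, hφ⟩
    have : NeZero r := ⟨hr.ne'⟩
    obtain ⟨h0, h1⟩ := mem_fixingSubgroup.1 hφ
    obtain ⟨ζ, hζ, h0⟩ := (fixes_pow_iff hr φ 0).1 h0
    obtain ⟨ζ', hζ', h1⟩ := (fixes_pow_iff hr φ 1).1 h1
    refine ⟨(rootsOfUnity.mkOfPowEq ζ hζ, rootsOfUnity.mkOfPowEq ζ' hζ'), Subtype.ext ?_⟩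
    refine AlgEquiv.coe_toAlgHom_injective (algHom_ext fun i => ?_)
    fin_cases i
    · exact (rootScale_x_zero _).trans h0.symm
    · exact (rootScale_x_one _).trans h1.symm

end NodalRing

/-- A `k`-algebra automorphism `φ` of `A = k[X,Y]/(XY)` fixes the images of `X^r` and
`Y^r` iff `φ(X) = ζ·X` and `φ(Y) = ζ'·Y` for some `r`-th roots of unity `ζ, ζ'`.
Moreover `(ζ, ζ') ↦ (X ↦ ζX, Y ↦ ζ'Y)` is a group isomorphism from `μ_r(k) × μ_r(k)`
onto the subgroup of `k`-algebra automorphisms of `A` fixing `X^r` and `Y^r`. -/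
theorem algEquiv_nodalRing_fixes_powers_iff_roots_of_unity
    (k : Type*) [Field k] (r : ℕ) (hr : 0 < r) :
    (∀ φ : NodalRing k ≃ₐ[k] NodalRing k,
      (φ (Ideal.Quotient.mk (nodalIdeal k) (X 0 ^ r))
          = Ideal.Quotient.mk (nodalIdeal k) (X 0 ^ r) ∧
       φ (Ideal.Quotient.mk (nodalIdeal k) (X 1 ^ r))
          = Ideal.Quotient.mk (nodalIdeal k) (X 1 ^ r)) ↔
      ∃ ζ ζ' : k, ζ ^ r = 1 ∧ ζ' ^ r = 1 ∧
        φ (Ideal.Quotient.mk (nodalIdeal k) (X 0))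
          = Ideal.Quotient.mk (nodalIdeal k) (C ζ * X 0) ∧
        φ (Ideal.Quotient.mk (nodalIdeal k) (X 1))
          = Ideal.Quotient.mk (nodalIdeal k) (C ζ' * X 1)) ∧
    ∃ S : Subgroup (NodalRing k ≃ₐ[k] NodalRing k),
      (∀ φ : NodalRing k ≃ₐ[k] NodalRing k, φ ∈ S ↔
        (φ (Ideal.Quotient.mk (nodalIdeal k) (X 0 ^ r))
            = Ideal.Quotient.mk (nodalIdeal k) (X 0 ^ r) ∧
         φ (Ideal.Quotient.mk (nodalIdeal k) (X 1 ^ r))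
            = Ideal.Quotient.mk (nodalIdeal k) (X 1 ^ r))) ∧
      ∃ e : rootsOfUnity r k × rootsOfUnity r k ≃* S,
        ∀ ζζ' : rootsOfUnity r k × rootsOfUnity r k,
          (e ζζ' : NodalRing k ≃ₐ[k] NodalRing k) (Ideal.Quotient.mk (nodalIdeal k) (X 0))
              = Ideal.Quotient.mk (nodalIdeal k) (C ((ζζ'.1 : kˣ) : k) * X 0) ∧
          (e ζζ' : NodalRing k ≃ₐ[k] NodalRing k) (Ideal.Quotient.mk (nodalIdeal k) (X 1))
              = Ideal.Quotient.mk (nodalIdeal k) (C ((ζζ'.2 : kˣ) : k) * X 1) := by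
  simp only [NodalRing.mk_C_mul_X, map_pow (Ideal.Quotient.mk (nodalIdeal k))]
  refine ⟨fun φ => ?_, NodalRing.fixingSubgroup k r, fun φ => NodalRing.mem_fixingSubgroup,
    MulEquiv.ofBijective (NodalRing.rootScale k r) (NodalRing.rootScale_bijective hr),
    fun u => ⟨NodalRing.rootScale_x_zero u, NodalRing.rootScale_x_one u⟩⟩
  rw [NodalRing.fixes_pow_iff hr φ 0, NodalRing.fixes_pow_iff hr φ 1]
  constructor
  · rintro ⟨⟨ζ, hζ, h0⟩, ζ', hζ', h1⟩
    exact ⟨ζ, ζ', hζ, hζ', h0, h1⟩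
  · rintro ⟨ζ, ζ', hζ, hζ', h0, h1⟩
    exact ⟨⟨ζ, hζ, h0⟩, ζ', hζ', h1⟩
end

section
/- Let p : E → X be a covering map with E preconnected, and let a group G act on E by homeomorphisms such that p(g•e) = p(e) for all g ∈ G and e ∈ E. Suppose the action is free (g•e = e for some e implies g = 1) and transitive on the fiber p⁻¹(p(e₀)) for some point e₀ ∈ E. Then every continuous G-equivariant map f : E → E with p ∘ f = p (i.e. f(g•e) = g•f(e) for all g, e) equals the action of a unique central element: there exists g in the center Z(G) with f(e) = g•e for all e ∈ E. -/
/-!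
A lift of `p` through itself on a preconnected space is determined by its value at one point
(`IsCoveringMap.eq_of_comp_eq`). Transitivity on the fiber gives `g` with `g • e₀ = f e₀`, so
`f = g • ·`. Equivariance of `f` makes `g` commute with `G` on the orbit of `e₀`, and freeness
turns this into centrality of `g`, as well as giving its uniqueness.
-/

/-- Let `p : E → X` be a covering map with `E` preconnected, and let a group `G` act
on `E` by homeomorphisms over `X`, freely, and transitively on the fiber over `p e₀`
for some point `e₀`.  Then every continuous `G`-equivariant map `f : E → E` with
`p ∘ f = p` equals the action of a unique central element of `G`. -/
theorem equivariant_deck_transformation_eq_central_smul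
    {E X : Type*} [TopologicalSpace E] [TopologicalSpace X] [PreconnectedSpace E]
    {p : E → X} (hp : IsCoveringMap p)
    {G : Type*} [Group G] [MulAction G E]
    (hcont : ∀ g : G, Continuous fun e : E => g • e)
    (hover : ∀ (g : G) (e : E), p (g • e) = p e)
    (hfree : ∀ (g : G) (e : E), g • e = e → g = 1)
    (e₀ : E) (htrans : ∀ e : E, p e = p e₀ → ∃ g : G, g • e₀ = e)
    (f : E → E) (hf : Continuous f) (hpf : ∀ e : E, p (f e) = p e)
    (hequiv : ∀ (g : G) (e : E), f (g • e) = g • f e) :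
    ∃! g : G, g ∈ Subgroup.center G ∧ ∀ e : E, f e = g • e := by
  have hinj : ∀ (a b : G) (e : E), a • e = b • e → a = b := fun a b e hab => by
    have h := hfree (b⁻¹ * a) e (by rw [mul_smul, hab, inv_smul_smul])
    exact (inv_mul_eq_one.mp h).symm
  obtain ⟨g, hg⟩ := htrans (f e₀) (hpf e₀)
  -- `f` and `g • ·` both lift `p` and agree at `e₀`, so they agree on the preconnected space `E`.
  have hfg : f = fun e => g • e :=
    hp.eq_of_comp_eq hf (hcont g) (funext fun e => (hpf e).trans (hover g e).symm) e₀ hg.symm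
  have hfg' : ∀ e, f e = g • e := fun e => congrFun hfg e
  refine ⟨g, ⟨Subgroup.mem_center_iff.mpr fun h => ?_, hfg'⟩, ?_⟩
  -- Freeness turns the equivariance identity `h • f e₀ = f (h • e₀)` into `h * g = g * h`.
  · apply hinj _ _ e₀
    rw [mul_smul, mul_smul, ← hfg', ← hfg', hequiv]
  · rintro g' ⟨-, hg'⟩
    exact hinj _ _ e₀ ((hg' e₀).symm.trans (hfg' e₀))
end
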